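/- In the CreditRisk⁺ model, for every i = 1,…,n and every nonnegative integer t the identity E_α[N_i 1_{L = t}] = S₀ r_{0,i} P_α[L = t − ν_i] + Σ_{j=1}^k α_j β_j r_{j,i} P_{α(j)}[L = t − ν_i] holds, where P[L = t − ν_i] is interpreted as 0 when t < ν_i. -/

import Mathlib

open MeasureTheory ProbabilityTheory Real

noncomputable section

/-- The gamma measure is sigma-finite (needed to form product measures). -/
instance gammaMeasure.instSigmaFinite (a r : ℝ) :
    SigmaFinite (gammaMeasure a r) := by
  unfold ProbabilityTheory.gammaMeasure ProbabilityTheory.gammaPDF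
  infer_instance

/-- Conditional Poisson intensity `R_i(s) = r_{0,i} S_0 + sum_j r_{j,i} s_j`. -/
def crpR {n k : ℕ} (S0 : ℝ) (r0 : Fin n → ℝ) (r : Fin k → Fin n → ℝ)
    (s : Fin k → ℝ) (i : Fin n) : ℝ :=
  r0 i * S0 + ∑ j, r j i * s j

/-- The CreditRisk⁺ measure `P_α` on `(Fin k → ℝ) × (Fin n → ℕ)`: the product of the
Gamma factor measures (shape `α j`, scale `β j`, i.e. rate `(β j)⁻¹`), composed with the
kernel sending the factor vector `s` to the product of Poisson measures with means `R_i(s)`,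
recorded jointly with `s`. -/
def crpMeasure {n k : ℕ} (S0 : ℝ) (r0 : Fin n → ℝ) (r : Fin k → Fin n → ℝ)
    (α β : Fin k → ℝ) : Measure ((Fin k → ℝ) × (Fin n → ℕ)) :=
  (Measure.pi fun j => gammaMeasure (α j) (β j)⁻¹).bind fun s =>
    (Measure.pi fun i => poissonMeasure (crpR S0 r0 r s i).toNNReal).map fun x => (s, x)

/-- Portfolio loss `L = ∑ ν_i N_i`. -/
def crpLoss {n k : ℕ} (ν : Fin n → ℕ) (x : (Fin k → ℝ) × (Fin n → ℕ)) : ℕ :=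
  ∑ i, ν i * x.2 i

/-- Value-at-risk of the ℕ-valued loss `L` at level `δ`: the smallest `l` with
`P[L ≤ l] ≥ δ` (a natural number since `L` is ℕ-valued). -/
def crpVaR {n k : ℕ} (P : Measure ((Fin k → ℝ) × (Fin n → ℕ)))
    (ν : Fin n → ℕ) (δ : ℝ) : ℕ :=
  sInf {l : ℕ | ENNReal.ofReal δ ≤ P {x | crpLoss ν x ≤ l}}

/-- `ρ_g`, the radius of convergence of the probability generating function. -/
def crpRadius {n k : ℕ} (ν : Fin n → ℕ) (r : Fin k → Fin n → ℝ) (β : Fin k → ℝ) : ℝ :=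
  sSup {z : ℝ | 0 < z ∧ ∀ j, ∑ i, r j i * z ^ ν i < 1 + (β j)⁻¹}

/-!
Conditionally on the factors, `N_i` is Poisson, so the Chen–Stein identity
`E[N_i F(N)] = R_i(s) E[F(N + e_i)]` removes the factor `N_i` at the price of the intensity
`R_i(s) = r_{0,i} S_0 + ∑_j r_{j,i} s_j` and of one extra default. The intensity is affine in the
factors, and multiplying a gamma density of shape `α_j` by `s_j` gives `α_j β_j` times the density
of shape `α_j + 1`: this is how `P_{α(j)}` enters. Finally, one more default of obligor `i` raises
the loss by `ν_i`.
-/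

open scoped ENNReal NNReal

section PiMeasure

variable {ι : Type*} [Fintype ι] {X : ι → Type*} [∀ i, MeasurableSpace (X i)]

lemma measurable_measure_pi {Ω : Type*} [MeasurableSpace Ω] {μ : ∀ i, Ω → Measure (X i)}
    [∀ i ω, IsProbabilityMeasure (μ i ω)] (hμ : ∀ i, Measurable (μ i)) :
    Measurable fun ω => Measure.pi fun i => μ i ω := by
  refine .measure_of_isPiSystem_of_isProbabilityMeasure generateFrom_pi.symm isPiSystem_pi ?_
  rintro _ ⟨A, hA, rfl⟩
  simp_rw [Measure.pi_pi]
  exact Finset.measurable_fun_prod _ fun i _ =>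
    (Measure.measurable_coe (hA i (Set.mem_univ i))).comp (hμ i)

lemma lintegral_pi_eq_of_forall_lintegral_update_eq [DecidableEq ι] {μ μ' : ∀ i, Measure (X i)}
    [∀ i, SigmaFinite (μ i)] [∀ i, SigmaFinite (μ' i)] (j : ι) (hμ : ∀ i ≠ j, μ i = μ' i)
    {f g : (∀ i, X i) → ℝ≥0∞} (hf : Measurable f) (hg : Measurable g)
    (hfg : ∀ x, ∫⁻ y, f (Function.update x j y) ∂μ j = ∫⁻ y, g (Function.update x j y) ∂μ' j) :
    ∫⁻ x, f x ∂Measure.pi μ = ∫⁻ x, g x ∂Measure.pi μ' := by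
  rcases isEmpty_or_nonempty (∀ i, X i) with _ | ⟨⟨x⟩⟩
  · simp
  have hμ_erase : (fun i : Finset.univ.erase j => μ i) = fun i : Finset.univ.erase j => μ' i :=
    funext fun i => hμ i (Finset.ne_of_mem_erase i.2)
  rw [lintegral_eq_lmarginal_univ x, lintegral_eq_lmarginal_univ x,
    lmarginal_erase' f hf (Finset.mem_univ j), lmarginal_erase' g hg (Finset.mem_univ j)]
  simp only [lmarginal, hfg, hμ_erase]

end PiMeasure

section Poisson

lemma measurable_poissonMeasure : Measurable poissonMeasure := by
  refine Measure.measurable_of_measurable_coe _ fun A hA => ?_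
  simp_rw [← lintegral_indicator_one hA, lintegral_countable', poissonMeasure_singleton]
  fun_prop

lemma succ_mul_poissonMeasure_singleton_succ (c : ℝ≥0) (m : ℕ) :
    ((m + 1 : ℕ) : ℝ≥0∞) * poissonMeasure c {m + 1} = c * poissonMeasure c {m} := by
  rw [poissonMeasure_singleton, poissonMeasure_singleton, ← ENNReal.ofReal_natCast,
    ← ENNReal.ofReal_coe_nnreal, ← ENNReal.ofReal_mul (by positivity),
    ← ENNReal.ofReal_mul (by positivity), Nat.factorial_succ]
  congr 1
  push_cast
  field_simp
  ring

lemma lintegral_natCast_mul_poissonMeasure (c : ℝ≥0) (g : ℕ → ℝ≥0∞) :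
    ∫⁻ m, m * g m ∂poissonMeasure c = c * ∫⁻ m, g (m + 1) ∂poissonMeasure c := by
  rw [lintegral_countable', lintegral_countable', tsum_eq_zero_add' ENNReal.summable,
    ← ENNReal.tsum_mul_left]
  simp only [Nat.cast_zero, zero_mul, zero_add]
  refine tsum_congr fun m => ?_
  rw [mul_right_comm, succ_mul_poissonMeasure_singleton_succ]
  ring

lemma lintegral_natCast_apply_mul_pi_poissonMeasure {ι : Type*} [Fintype ι] [DecidableEq ι]
    (c : ι → ℝ≥0) (g : (ι → ℕ) → ℝ≥0∞) (i : ι) :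
    ∫⁻ x, x i * g x ∂Measure.pi (fun l => poissonMeasure (c l)) =
      c i * ∫⁻ x, g (x + Pi.single i 1) ∂Measure.pi (fun l => poissonMeasure (c l)) := by
  rw [← lintegral_const_mul _ (measurable_of_countable _)]
  refine lintegral_pi_eq_of_forall_lintegral_update_eq i (fun _ _ => rfl)
    (measurable_of_countable _) (measurable_of_countable _) fun x => ?_
  have update_add_single (m : ℕ) :
      Function.update x i m + Pi.single i 1 = Function.update x i (m + 1) := by
    ext l
    rcases eq_or_ne l i with rfl | hl <;> simp [*]
  simp_rw [update_add_single, Function.update_self]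
  rw [lintegral_natCast_mul_poissonMeasure, lintegral_const_mul _ (measurable_of_countable _)]

end Poisson

section Gamma

lemma ae_nonneg_gammaMeasure (a b : ℝ) : ∀ᵐ x ∂gammaMeasure a b, 0 ≤ x := by
  rw [ae_iff, gammaMeasure]
  simp only [not_le]
  exact (withDensity_apply _ measurableSet_Iio).trans (lintegral_gammaPDF_of_nonpos le_rfl)

lemma ofReal_mul_gammaPDF {a b : ℝ} (ha : 0 < a) (hb : 0 < b) (x : ℝ) :
    ENNReal.ofReal x * gammaPDF a b x = ENNReal.ofReal (a / b) * gammaPDF (a + 1) b x := by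
  rcases lt_trichotomy x 0 with hx | rfl | hx
  · simp [gammaPDF_of_neg hx]
  · simp [gammaPDF_of_nonneg le_rfl, ha.ne']
  · rw [gammaPDF_of_nonneg hx.le, gammaPDF_of_nonneg hx.le, ← ENNReal.ofReal_mul hx.le,
      ← ENNReal.ofReal_mul (by positivity), Gamma_add_one ha.ne', rpow_add_one hb.ne',
      add_sub_cancel_right, rpow_sub_one hx.ne']
    have := (Gamma_pos_of_pos ha).ne'
    congr 1
    field_simp

lemma lintegral_ofReal_mul_gammaMeasure {a b : ℝ} (ha : 0 < a) (hb : 0 < b) {f : ℝ → ℝ≥0∞}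
    (hf : Measurable f) :
    ∫⁻ x, ENNReal.ofReal x * f x ∂gammaMeasure a b =
      ENNReal.ofReal (a / b) * ∫⁻ x, f x ∂gammaMeasure (a + 1) b := by
  have measurable_gammaPDF (a : ℝ) : Measurable (gammaPDF a b) :=
    (measurable_gammaPDFReal a b).ennreal_ofReal
  rw [gammaMeasure, gammaMeasure,
    lintegral_withDensity_eq_lintegral_mul _ (measurable_gammaPDF a) (by fun_prop),
    lintegral_withDensity_eq_lintegral_mul _ (measurable_gammaPDF (a + 1)) hf,
    ← lintegral_const_mul _ ((measurable_gammaPDF (a + 1)).mul hf)]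
  refine lintegral_congr fun x => ?_
  simp only [Pi.mul_apply]
  rw [← mul_assoc, ← mul_assoc, mul_comm (gammaPDF a b x), ofReal_mul_gammaPDF ha hb]

lemma lintegral_ofReal_apply_mul_pi_gammaMeasure {ι : Type*} [Fintype ι] [DecidableEq ι]
    {a b : ι → ℝ} {j : ι} (ha : 0 < a j) (hb : 0 < b j) {f : (ι → ℝ) → ℝ≥0∞}
    (hf : Measurable f) :
    ∫⁻ s, ENNReal.ofReal (s j) * f s ∂Measure.pi (fun l => gammaMeasure (a l) (b l)) =
      ENNReal.ofReal (a j / b j) *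
        ∫⁻ s, f s ∂Measure.pi fun l => gammaMeasure (Function.update a j (a j + 1) l) (b l) := by
  rw [← lintegral_const_mul _ hf]
  refine lintegral_pi_eq_of_forall_lintegral_update_eq j
    (fun l hl => by rw [Function.update_of_ne hl]) (by fun_prop) (by fun_prop) fun s => ?_
  have hf_update : Measurable fun y => f (Function.update s j y) :=
    hf.comp (measurable_update s)
  simp_rw [Function.update_self]
  rw [lintegral_ofReal_mul_gammaMeasure ha hb hf_update, lintegral_const_mul _ hf_update]

end Gamma

section CreditRisk

variable {n k : ℕ} {S0 : ℝ} {r0 : Fin n → ℝ} {r : Fin k → Fin n → ℝ} {α β : Fin k → ℝ}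

/-- The joint law of the independent gamma factors `S_1, …, S_k`, with shapes `α j` and
scales `β j`; Mathlib's `gammaMeasure` takes the rate `(β j)⁻¹`. -/
def crpFactorMeasure (α β : Fin k → ℝ) : Measure (Fin k → ℝ) :=
  Measure.pi fun j => gammaMeasure (α j) (β j)⁻¹

lemma isProbabilityMeasure_crpFactorMeasure (hα : ∀ j, 0 < α j) (hβ : ∀ j, 0 < β j) :
    IsProbabilityMeasure (crpFactorMeasure α β) := by
  have (j : Fin k) := isProbabilityMeasure_gammaMeasure (hα j) (inv_pos.2 (hβ j))
  unfold crpFactorMeasure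
  infer_instance

instance sigmaFinite_crpFactorMeasure (α β : Fin k → ℝ) : SigmaFinite (crpFactorMeasure α β) := by
  unfold crpFactorMeasure
  infer_instance

lemma ae_nonneg_crpFactorMeasure (α β : Fin k → ℝ) :
    ∀ᵐ s ∂crpFactorMeasure α β, ∀ j, 0 ≤ s j :=
  ae_all_iff.2 fun j => Measure.tendsto_eval_ae_ae.eventually (ae_nonneg_gammaMeasure (α j) (β j)⁻¹)

lemma lintegral_ofReal_apply_mul_crpFactorMeasure {j : Fin k} (hα : 0 < α j) (hβ : 0 < β j)
    {f : (Fin k → ℝ) → ℝ≥0∞} (hf : Measurable f) :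
    ∫⁻ s, ENNReal.ofReal (s j) * f s ∂crpFactorMeasure α β =
      ENNReal.ofReal (α j * β j) *
        ∫⁻ s, f s ∂crpFactorMeasure (Function.update α j (α j + 1)) β := by
  simpa only [crpFactorMeasure, div_inv_eq_mul] using
    lintegral_ofReal_apply_mul_pi_gammaMeasure (b := fun l => (β l)⁻¹) hα (inv_pos.2 hβ) hf

lemma measurable_crpR (S0 : ℝ) (r0 : Fin n → ℝ) (r : Fin k → Fin n → ℝ) (i : Fin n) :
    Measurable fun s => crpR S0 r0 r s i := by
  unfold crpR
  fun_prop

lemma ofReal_crpR {i : Fin n} (hS0 : 0 ≤ S0) (hr0 : 0 ≤ r0 i) (hr : ∀ j, 0 ≤ r j i)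
    {s : Fin k → ℝ} (hs : ∀ j, 0 ≤ s j) :
    ENNReal.ofReal (crpR S0 r0 r s i) =
      ENNReal.ofReal (S0 * r0 i) + ∑ j, ENNReal.ofReal (r j i) * ENNReal.ofReal (s j) := by
  have hrs (j : Fin k) : 0 ≤ r j i * s j := mul_nonneg (hr j) (hs j)
  rw [crpR, ENNReal.ofReal_add (mul_nonneg hr0 hS0) (Finset.sum_nonneg fun j _ => hrs j),
    ENNReal.ofReal_sum_of_nonneg fun j _ => hrs j, mul_comm (r0 i)]
  simp_rw [ENNReal.ofReal_mul (hr _)]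

lemma lintegral_ofReal_crpR_mul_crpFactorMeasure {i : Fin n} (hS0 : 0 ≤ S0) (hr0 : 0 ≤ r0 i)
    (hr : ∀ j, 0 ≤ r j i) (hα : ∀ j, 0 < α j) (hβ : ∀ j, 0 < β j)
    {f : (Fin k → ℝ) → ℝ≥0∞} (hf : Measurable f) :
    ∫⁻ s, ENNReal.ofReal (crpR S0 r0 r s i) * f s ∂crpFactorMeasure α β =
      ENNReal.ofReal (S0 * r0 i) * ∫⁻ s, f s ∂crpFactorMeasure α β +
        ∑ j, ENNReal.ofReal (α j * β j * r j i) *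
          ∫⁻ s, f s ∂crpFactorMeasure (Function.update α j (α j + 1)) β := by
  have hsplit : ∀ᵐ s ∂crpFactorMeasure α β, ENNReal.ofReal (crpR S0 r0 r s i) * f s =
      ENNReal.ofReal (S0 * r0 i) * f s +
        ∑ j, ENNReal.ofReal (r j i) * (ENNReal.ofReal (s j) * f s) := by
    filter_upwards [ae_nonneg_crpFactorMeasure α β] with s hs
    simp_rw [ofReal_crpR hS0 hr0 hr hs, add_mul, Finset.sum_mul, mul_assoc]
  rw [lintegral_congr_ae hsplit, lintegral_add_left (by fun_prop), lintegral_const_mul _ hf,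
    lintegral_finsetSum _ (by fun_prop)]
  congr 1
  refine Finset.sum_congr rfl fun j _ => ?_
  rw [lintegral_const_mul _ (by fun_prop),
    lintegral_ofReal_apply_mul_crpFactorMeasure (hα j) (hβ j) hf, ← mul_assoc,
    ← ENNReal.ofReal_mul (hr j), mul_comm (r j i)]

/-- The conditional law of the counts `N_1, …, N_n` given the factors: independent Poisson
variables with intensities `R_i(s)`. A negative intensity, which only occurs off the support of the
factors, is replaced by `0`. -/
def crpCountKernel (S0 : ℝ) (r0 : Fin n → ℝ) (r : Fin k → Fin n → ℝ) :
    Kernel (Fin k → ℝ) (Fin n → ℕ) where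
  toFun s := Measure.pi fun i => poissonMeasure (crpR S0 r0 r s i).toNNReal
  measurable' := measurable_measure_pi fun i =>
    measurable_poissonMeasure.comp (measurable_crpR S0 r0 r i).real_toNNReal

lemma crpCountKernel_apply (S0 : ℝ) (r0 : Fin n → ℝ) (r : Fin k → Fin n → ℝ) (s : Fin k → ℝ) :
    crpCountKernel S0 r0 r s = Measure.pi fun i => poissonMeasure (crpR S0 r0 r s i).toNNReal :=
  rfl

instance isMarkovKernel_crpCountKernel (S0 : ℝ) (r0 : Fin n → ℝ) (r : Fin k → Fin n → ℝ) :
    IsMarkovKernel (crpCountKernel S0 r0 r) :=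
  ⟨fun s => by rw [crpCountKernel_apply]; infer_instance⟩

lemma crpMeasure_eq_compProd (S0 : ℝ) (r0 : Fin n → ℝ) (r : Fin k → Fin n → ℝ)
    (α β : Fin k → ℝ) :
    crpMeasure S0 r0 r α β = (crpFactorMeasure α β).compProd (crpCountKernel S0 r0 r) := by
  rw [Measure.compProd_eq_comp_prod, crpMeasure, crpFactorMeasure]
  congr 1
  funext s
  rw [Kernel.prod_apply, Kernel.id_apply, Measure.dirac_prod, crpCountKernel_apply]

lemma isProbabilityMeasure_crpMeasure (S0 : ℝ) (r0 : Fin n → ℝ) (r : Fin k → Fin n → ℝ)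
    (hα : ∀ j, 0 < α j) (hβ : ∀ j, 0 < β j) : IsProbabilityMeasure (crpMeasure S0 r0 r α β) := by
  have := isProbabilityMeasure_crpFactorMeasure hα hβ
  rw [crpMeasure_eq_compProd]
  infer_instance

lemma lintegral_count_mul_crpMeasure (hS0 : 0 ≤ S0) (hr0 : ∀ i, 0 ≤ r0 i)
    (hr : ∀ j i, 0 ≤ r j i) (hα : ∀ j, 0 < α j) (hβ : ∀ j, 0 < β j) (i : Fin n)
    {F : (Fin k → ℝ) × (Fin n → ℕ) → ℝ≥0∞} (hF : Measurable F) :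
    ∫⁻ x, x.2 i * F x ∂crpMeasure S0 r0 r α β =
      ENNReal.ofReal (S0 * r0 i) *
          ∫⁻ x, F (x.1, x.2 + Pi.single i 1) ∂crpMeasure S0 r0 r α β +
        ∑ j, ENNReal.ofReal (α j * β j * r j i) * ∫⁻ x, F (x.1, x.2 + Pi.single i 1)
          ∂crpMeasure S0 r0 r (Function.update α j (α j + 1)) β := by
  have hF_shift : Measurable fun x : (Fin k → ℝ) × (Fin n → ℕ) =>
      F (x.1, x.2 + Pi.single i 1) := by fun_prop
  have chen_stein (s : Fin k → ℝ) :
      ∫⁻ x, x i * F (s, x) ∂crpCountKernel S0 r0 r s =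
        ENNReal.ofReal (crpR S0 r0 r s i) *
          ∫⁻ x, F (s, x + Pi.single i 1) ∂crpCountKernel S0 r0 r s := by
    rw [crpCountKernel_apply]
    exact lintegral_natCast_apply_mul_pi_poissonMeasure _ (fun x => F (s, x)) i
  simp_rw [crpMeasure_eq_compProd, Measure.lintegral_compProd hF_shift]
  rw [Measure.lintegral_compProd (by fun_prop), lintegral_congr chen_stein,
    lintegral_ofReal_crpR_mul_crpFactorMeasure hS0 (hr0 i) (hr · i) hα hβ
      hF_shift.lintegral_kernel_prod_right']

lemma measurableSet_crpLoss_eq (ν : Fin n → ℕ) (t : ℕ) :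
    MeasurableSet {x : (Fin k → ℝ) × (Fin n → ℕ) | crpLoss ν x = t} :=
  measurable_snd (Set.to_countable {x : Fin n → ℕ | ∑ i, ν i * x i = t}).measurableSet

lemma crpLoss_add_single (ν : Fin n → ℕ) (x : (Fin k → ℝ) × (Fin n → ℕ)) (i : Fin n) :
    crpLoss ν (x.1, x.2 + Pi.single i 1) = crpLoss ν x + ν i := by
  simp [crpLoss, mul_add, Finset.sum_add_distrib, Pi.single_apply]

lemma measureReal_crpLoss_add_single_eq (P : Measure ((Fin k → ℝ) × (Fin n → ℕ)))
    (ν : Fin n → ℕ) (i : Fin n) (t : ℕ) :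
    P.real {x | crpLoss ν (x.1, x.2 + Pi.single i 1) = t} =
      if ν i ≤ t then (P {x | crpLoss ν x = t - ν i}).toReal else 0 := by
  simp only [crpLoss_add_single, measureReal_def]
  split_ifs with ht
  · simp only [eq_tsub_iff_add_eq_of_le ht]
  · have (x : (Fin k → ℝ) × (Fin n → ℕ)) : crpLoss ν x + ν i ≠ t := by lia
    simp [this]

lemma setLIntegral_count_crpMeasure (hS0 : 0 ≤ S0) (hr0 : ∀ i, 0 ≤ r0 i)
    (hr : ∀ j i, 0 ≤ r j i) (hα : ∀ j, 0 < α j) (hβ : ∀ j, 0 < β j) (i : Fin n)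
    {A : Set ((Fin k → ℝ) × (Fin n → ℕ))} (hA : MeasurableSet A) :
    ∫⁻ x in A, x.2 i ∂crpMeasure S0 r0 r α β =
      ENNReal.ofReal (S0 * r0 i) *
          crpMeasure S0 r0 r α β {x | (x.1, x.2 + Pi.single i 1) ∈ A} +
        ∑ j, ENNReal.ofReal (α j * β j * r j i) *
          crpMeasure S0 r0 r (Function.update α j (α j + 1)) β
            {x | (x.1, x.2 + Pi.single i 1) ∈ A} := by
  have hshift : MeasurableSet
      {x : (Fin k → ℝ) × (Fin n → ℕ) | (x.1, x.2 + Pi.single i 1) ∈ A} :=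
    hA.preimage (by fun_prop)
  have hindicator (x : (Fin k → ℝ) × (Fin n → ℕ)) :
      A.indicator (fun x => (x.2 i : ℝ≥0∞)) x = x.2 i * A.indicator 1 x := by
    by_cases hx : x ∈ A <;> simp [hx]
  simp_rw [← lintegral_indicator hA, hindicator, ← lintegral_indicator_one hshift]
  exact lintegral_count_mul_crpMeasure hS0 hr0 hr hα hβ i (measurable_one.indicator hA)

theorem crp_numerator_identity_general (hS0 : 0 ≤ S0) (hr0 : ∀ i, 0 ≤ r0 i)
    (hr : ∀ j i, 0 ≤ r j i) (hα : ∀ j, 0 < α j) (hβ : ∀ j, 0 < β j) (i : Fin n)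
    {A : Set ((Fin k → ℝ) × (Fin n → ℕ))} (hA : MeasurableSet A) :
    ∫ x in A, (x.2 i : ℝ) ∂crpMeasure S0 r0 r α β =
      S0 * r0 i * (crpMeasure S0 r0 r α β).real {x | (x.1, x.2 + Pi.single i 1) ∈ A} +
        ∑ j, α j * β j * r j i * (crpMeasure S0 r0 r (Function.update α j (α j + 1)) β).real
          {x | (x.1, x.2 + Pi.single i 1) ∈ A} := by
  have hα_update (j : Fin k) : ∀ l, 0 < Function.update α j (α j + 1) l :=
    (Function.forall_update_iff α fun _ a => 0 < a).2
      ⟨(hα j).trans (lt_add_one _), fun l _ => hα l⟩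
  have := isProbabilityMeasure_crpMeasure S0 r0 r hα hβ
  have (j : Fin k) := isProbabilityMeasure_crpMeasure S0 r0 r (hα_update j) hβ
  have hcoef (j : Fin k) : 0 ≤ α j * β j * r j i :=
    mul_nonneg (mul_pos (hα j) (hβ j)).le (hr j i)
  have hfinite (c : ℝ) (P : Measure ((Fin k → ℝ) × (Fin n → ℕ))) [IsProbabilityMeasure P] :
      ENNReal.ofReal c * P {x | (x.1, x.2 + Pi.single i 1) ∈ A} ≠ ∞ :=
    ENNReal.mul_ne_top ENNReal.ofReal_ne_top (measure_ne_top P _)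
  have hlintegral : ∫ x in A, (x.2 i : ℝ) ∂crpMeasure S0 r0 r α β =
      (∫⁻ x in A, x.2 i ∂crpMeasure S0 r0 r α β).toReal := by
    rw [integral_eq_lintegral_of_nonneg_ae (ae_of_all _ fun x => Nat.cast_nonneg _) (by fun_prop)]
    simp_rw [ENNReal.ofReal_natCast]
  rw [hlintegral, setLIntegral_count_crpMeasure hS0 hr0 hr hα hβ i hA,
    ENNReal.toReal_add (hfinite _ _) (ENNReal.sum_ne_top.2 fun j _ => hfinite _ _),
    ENNReal.toReal_sum fun j _ => hfinite _ _]
  simp only [ENNReal.toReal_mul, ENNReal.toReal_ofReal (mul_nonneg hS0 (hr0 i)),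
    ENNReal.toReal_ofReal (hcoef _), measureReal_def]

end CreditRisk

/-- for each `i` and each `t ∈ ℕ`,
`E_α[N_i 1_{L=t}] = S₀ r_{0,i} P_α[L = t − ν_i] + ∑_j α_j β_j r_{j,i} P_{α(j)}[L = t − ν_i]`,
with `P[L = t − ν_i]` interpreted as `0` when `t < ν_i`. -/
theorem crp_numerator_identity {n k : ℕ} (hn : 0 < n) (hk : 0 < k)
    (ν : Fin n → ℕ) (hν : ∀ i, 0 < ν i)
    (S0 : ℝ) (hS0 : 0 ≤ S0)
    (r0 : Fin n → ℝ) (r : Fin k → Fin n → ℝ)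
    (hr0 : ∀ i, 0 ≤ r0 i) (hr : ∀ j i, 0 ≤ r j i)
    (hr0sum : ∑ i, r0 i = 1) (hrsum : ∀ j, ∑ i, r j i = 1)
    (hrpos : ∀ i, 0 < ∑ j, r j i)
    (α β : Fin k → ℝ) (hα : ∀ j, 0 < α j) (hβ : ∀ j, 0 < β j)
    (i : Fin n) (t : ℕ) :
    ∫ x in {y | crpLoss ν y = t}, (x.2 i : ℝ) ∂(crpMeasure S0 r0 r α β)
      = S0 * r0 i *
          (if ν i ≤ t then
            ((crpMeasure S0 r0 r α β) {x | crpLoss ν x = t - ν i}).toReal else 0)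
        + ∑ j, α j * β j * r j i *
          (if ν i ≤ t then
            ((crpMeasure S0 r0 r (Function.update α j (α j + 1)) β)
              {x | crpLoss ν x = t - ν i}).toReal else 0) := by
  rw [crp_numerator_identity_general hS0 hr0 hr hα hβ i (measurableSet_crpLoss_eq ν t)]
  simp only [Set.mem_ofPred_eq, measureReal_crpLoss_add_single_eq]
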